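/- arXiv:2603.16798 — 2 statements merged into one kernel-verified Lean document; each statement's English description precedes it below -/
import Mathlib

section
/- There exists an absolute constant c > 0 such that the following holds for every ε ∈ (0,1) and every δ ∈ (0, cε). Set γ = (1/δ)·log(1 + (ε/2)/(1−ε/2)) and m = ⌊c·γ²/log γ⌋. Then there exists a measurable function f : ℝ → ℝ satisfying (1−ε)·φ(x−δ) ≤ f(x) ≤ φ(x−δ) for all x ∈ ℝ, such that for every integer i with 1 ≤ i ≤ m, ∫_ℝ xⁱ f(x) dx / ∫_ℝ f(x) dx = E_{z∼N(0,1)}[zⁱ]. (Equivalently: the conditional distribution on visible samples of some ε-corrupted version of N(δ,1) matches the first m moments of the standard Gaussian.) -/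
open MeasureTheory

/-- The probability density function of the standard Gaussian `N(0,1)`. -/
noncomputable def gaussPDF (x : ℝ) : ℝ := Real.exp (-x ^ 2 / 2) / Real.sqrt (2 * Real.pi)

open Polynomial.Chebyshev in
lemma aux_orth (i j : ℕ) :
    ∫ x : ℝ, (U ℝ i).eval x * (U ℝ j).eval x * Real.sqrt (1 - x ^ 2) =
      if i = j then Real.pi / 2 else 0 := by
  have h1 : ∫ x : ℝ, (U ℝ i).eval x * (U ℝ j).eval x * Real.sqrt (1 - x ^ 2)
      = ∫ x, (1 - x ^ 2) * ((U ℝ i).eval x * (U ℝ j).eval x) ∂measureT := by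
    rw [integral_measureT, intervalIntegral.integral_of_le (by norm_num),
      ← integral_indicator measurableSet_Ioc]
    congr 1
    ext x
    by_cases hx : x ∈ Set.Ioc (-1 : ℝ) 1
    · rw [Set.indicator_of_mem hx]
      have h0 : 0 ≤ 1 - x ^ 2 := by nlinarith [hx.1, hx.2]
      rcases h0.eq_or_lt with h | h
      · simp [← h]
      · have hs := Real.mul_self_sqrt h0
        have hp := Real.sqrt_pos.mpr h
        simp only [Real.sqrt_inv]
        field_simp
        rw [Real.sq_sqrt h0]
    · rw [Set.indicator_of_notMem hx]
      have : 1 - x ^ 2 ≤ 0 := by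
        simp only [Set.mem_Ioc, not_and_or, not_lt, not_le] at hx
        rcases hx with hx | hx <;> nlinarith
      rw [Real.sqrt_eq_zero_of_nonpos this, mul_zero]
  have h2 : ∫ x, (1 - x ^ 2) * ((U ℝ i).eval x * (U ℝ j).eval x) ∂measureT
      = ∫ x, ((T ℝ ((i : ℤ) - j)).eval x - (T ℝ ((i : ℤ) + j + 2)).eval x) / 2 ∂measureT := by
    rw [integral_measureT_eq_integral_cos, integral_measureT_eq_integral_cos]
    congr 1
    ext θ
    have e1 := U_real_cos θ (i : ℤ)
    have e2 := U_real_cos θ (j : ℤ)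
    have e3 : (1 - Real.cos θ ^ 2) = Real.sin θ * Real.sin θ := by
      nlinarith [Real.sin_sq_add_cos_sq θ]
    have e4 : (1 - Real.cos θ ^ 2) *
        ((U ℝ i).eval (Real.cos θ) * (U ℝ j).eval (Real.cos θ)) =
        Real.sin (((i : ℤ) + 1 : ℝ) * θ) * Real.sin (((j : ℤ) + 1 : ℝ) * θ) := by
      rw [← e1, ← e2, e3]; ring
    rw [e4, T_real_cos, T_real_cos]
    have e5 : (((i : ℤ) - j : ℤ) : ℝ) * θ = ((i : ℤ) + 1 : ℝ) * θ - ((j : ℤ) + 1 : ℝ) * θ := by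
      push_cast; ring
    have e6 : (((i : ℤ) + j + 2 : ℤ) : ℝ) * θ = ((i : ℤ) + 1 : ℝ) * θ + ((j : ℤ) + 1 : ℝ) * θ := by
      push_cast; ring
    rw [e5, e6, Real.cos_sub, Real.cos_add]; ring
  rw [h1, h2, integral_div, integral_sub (integrable_measureT (by fun_prop))
    (integrable_measureT (by fun_prop)),
    integral_eval_T_real_measureT_of_ne_zero (n := (i : ℤ) + j + 2) (by omega)]
  split_ifs with h
  · subst h
    rw [sub_self, integral_eval_T_real_measureT_zero]; ring
  · rw [integral_eval_T_real_measureT_of_ne_zero (by omega)]; ring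

open Polynomial.Chebyshev in
lemma aux_U_bound (n : ℕ) (x : ℝ) : |(U ℝ n).eval x| ≤ (3 * max 1 |x|) ^ n := by
  have key : ∀ n : ℕ, |(U ℝ n).eval x| ≤ (3 * max 1 |x|) ^ n ∧
      |(U ℝ (n + 1 : ℕ)).eval x| ≤ (3 * max 1 |x|) ^ (n + 1) := by
    intro n
    have h1 : 1 ≤ max 1 |x| := le_max_left _ _
    have h2 : |x| ≤ max 1 |x| := le_max_right _ _
    set M := max 1 |x|
    induction n with
    | zero =>
      simp only [Nat.cast_zero, U_zero, zero_add, Nat.cast_one, U_one]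
      simp [abs_mul]
      linarith
    | succ n ih =>
      refine ⟨ih.2, ?_⟩
      have e : (U ℝ ((n + 1 + 1 : ℕ) : ℤ)).eval x =
          2 * x * (U ℝ ((n + 1 : ℕ) : ℤ)).eval x - (U ℝ (n : ℤ)).eval x := by
        push_cast
        rw [show (n : ℤ) + 1 + 1 = n + 2 by ring, U_add_two]
        simp only [Polynomial.eval_sub, Polynomial.eval_mul, Polynomial.eval_ofNat,
          Polynomial.eval_X]
      rw [e]
      have h3 : 0 ≤ (3 * M) ^ n := by positivity
      calc _ ≤ |2 * x * (U ℝ ((n + 1 : ℕ) : ℤ)).eval x| + |(U ℝ (n : ℤ)).eval x| := abs_sub _ _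
        _ = 2 * |x| * |(U ℝ ((n + 1 : ℕ) : ℤ)).eval x| + |(U ℝ (n : ℤ)).eval x| := by
            rw [abs_mul, abs_mul, abs_two]
        _ ≤ 2 * M * (3 * M) ^ (n + 1) + (3 * M) ^ n := by
            gcongr
            · exact ih.2
            · exact ih.1
        _ ≤ (3 * M) ^ (n + 1 + 1) := by
            have : (3 * M) ^ n ≤ M * (3 * M) ^ (n + 1) := by
              rw [pow_succ]
              have : 1 ≤ M * (3 * M) := by nlinarith
              nlinarith
            rw [pow_succ _ (n + 1)]; linarith
  exact (key n).1

lemma aux_int_pow (k : ℕ) {b : ℝ} (hb : 0 < b) :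
    Integrable fun x : ℝ => x ^ k * Real.exp (-b * x ^ 2) := by
  have := integrable_rpow_mul_exp_neg_mul_sq hb (s := (k : ℝ)) (by
    have : (0 : ℝ) ≤ k := by positivity
    linarith)
  simpa using this

lemma aux_int_poly (p : Polynomial ℝ) {b : ℝ} (hb : 0 < b) :
    Integrable fun x : ℝ => p.eval x * Real.exp (-b * x ^ 2) := by
  induction p using Polynomial.induction_on' with
  | add p q hp hq =>
    simp only [Polynomial.eval_add, add_mul]
    exact hp.add hq
  | monomial n a =>
    simp only [Polynomial.eval_monomial, mul_assoc]
    exact (aux_int_pow n hb).const_mul a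

lemma aux_int_bdd (p : Polynomial ℝ) {b A : ℝ} (hb : 0 < b) (g : ℝ → ℝ) (hg : Measurable g)
    (hA : ∀ x, |g x| ≤ A * Real.exp (-b * x ^ 2)) :
    Integrable fun x : ℝ => p.eval x * g x := by
  refine ((aux_int_poly p hb).norm.const_mul A).mono'
    (by have := p.continuous; exact (this.measurable.mul hg).aestronglyMeasurable) ?_
  filter_upwards with x
  rw [norm_mul, norm_mul, Real.norm_eq_abs, Real.norm_eq_abs, Real.norm_eq_abs, Real.abs_exp]
  calc _ ≤ |p.eval x| * (A * Real.exp (-b * x ^ 2)) := by gcongr; exact hA x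
    _ = _ := by ring

lemma aux_sqrt_zero {x : ℝ} (hx : 1 ≤ |x|) : Real.sqrt (1 - x ^ 2) = 0 := by
  apply Real.sqrt_eq_zero_of_nonpos
  have := sq_abs x
  nlinarith

lemma aux_int_sqrt (g : ℝ → ℝ) (hg : Continuous g) :
    Integrable fun x : ℝ => g x * Real.sqrt (1 - x ^ 2) := by
  apply Continuous.integrable_of_hasCompactSupport
  · fun_prop
  · apply HasCompactSupport.of_support_subset_isCompact (isCompact_Icc (a := (-1 : ℝ)) (b := 1))
    intro x hx
    by_contra h
    apply hx
    have : 1 ≤ |x| := by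
      by_contra h'
      push Not at h'
      rw [abs_lt] at h'
      exact h ⟨h'.1.le, h'.2.le⟩
    simp [aux_sqrt_zero this]

open Polynomial.Chebyshev in
lemma aux_core (m : ℕ) (D : ℝ → ℝ) (hD : Measurable D) (A R : ℝ) (hA : 0 ≤ A) (hR : 1 ≤ R)
    (hDA : ∀ x, |D x| ≤ A * Real.exp (-(5 / 16) * x ^ 2)) (hD0 : ∀ x, |x| ≤ R → D x = 0)
    (hm : ∀ x, R ≤ |x| → (18 * |x|) ^ m ≤ Real.exp (x ^ 2 / 8)) :
    ∃ v : ℝ → ℝ, Continuous v ∧ (∀ x, 1 ≤ |x| → v x = 0) ∧ (∀ x, |v x| ≤ 5 * A) ∧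
      (∀ k : ℕ, Integrable fun x => x ^ k * v x) ∧
      ∀ k : ℕ, k ≤ m → ∫ x, x ^ k * (v x + D x) = 0 := by
  set a : ℕ → ℝ := fun i => -(2 / Real.pi) * ∫ x, (U ℝ i).eval x * D x with ha
  set v : ℝ → ℝ := fun x => (∑ i ∈ Finset.range (m + 1), a i * (U ℝ i).eval x) *
    Real.sqrt (1 - x ^ 2) with hv
  have hpc : Continuous fun x : ℝ => ∑ i ∈ Finset.range (m + 1), a i * (U ℝ i).eval x := by
    fun_prop
  have hvi : ∀ p : Polynomial ℝ, Integrable fun x => p.eval x * v x := by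
    intro p
    have := aux_int_sqrt (fun x => p.eval x * ∑ i ∈ Finset.range (m + 1), a i * (U ℝ i).eval x)
      (by fun_prop)
    simpa only [hv, mul_assoc] using this
  have hDi : ∀ p : Polynomial ℝ, Integrable fun x => p.eval x * D x := fun p =>
    aux_int_bdd p (by norm_num) D hD hDA
  have hG : ∫ x : ℝ, Real.exp (-(3 / 16) * x ^ 2) ≤ 5 := by
    rw [integral_gaussian]
    apply Real.sqrt_le_iff.mpr
    constructor
    · norm_num
    · have := Real.pi_lt_four
      rw [div_le_iff₀ (by norm_num)]; linarith
  have ha_bound : ∀ i ∈ Finset.range (m + 1), (2 ^ m * 3 ^ m) * |a i| ≤ 5 * A := by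
    intro i hi
    have hi' : i ≤ m := by simpa [Nat.lt_succ_iff] using hi
    have hpi : 2 / Real.pi ≤ 1 := by
      rw [div_le_one Real.pi_pos]; linarith [Real.pi_gt_three]
    have h1 : |a i| ≤ ∫ x, |(U ℝ i).eval x * D x| := by
      rw [ha]; simp only
      rw [abs_mul, abs_neg, abs_of_nonneg (by positivity : 0 ≤ 2 / Real.pi)]
      have := abs_integral_le_integral_abs (f := fun x => (U ℝ i).eval x * D x) (μ := volume)
      nlinarith [abs_nonneg (∫ x, (U ℝ i).eval x * D x), Real.pi_pos]
    have h2 : (2 ^ m * 3 ^ m) * ∫ x, |(U ℝ i).eval x * D x| ≤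
        ∫ x : ℝ, A * Real.exp (-(3 / 16) * x ^ 2) := by
      rw [← integral_const_mul]
      apply integral_mono ((hDi _).abs.const_mul _)
        ((integrable_exp_neg_mul_sq (by norm_num)).const_mul A)
      intro x
      simp only
      rcases le_total |x| R with h | h
      · rw [hD0 x h]; simp; positivity
      · have hx1 : 1 ≤ |x| := hR.trans h
        have hU := aux_U_bound i x
        rw [max_eq_right hx1] at hU
        have hU' : (3 * |x|) ^ i ≤ (3 * |x|) ^ m := pow_le_pow_right₀ (by linarith) hi'
        rw [abs_mul]
        calc (2 ^ m * 3 ^ m : ℝ) * (|(U ℝ i).eval x| * |D x|)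
            ≤ (2 ^ m * 3 ^ m) * ((3 * |x|) ^ m * (A * Real.exp (-(5 / 16) * x ^ 2))) := by
              gcongr
              · exact hU.trans hU'
              · exact hDA x
          _ = (18 * |x|) ^ m * (A * Real.exp (-(5 / 16) * x ^ 2)) := by
              rw [← mul_assoc, ← mul_pow, ← mul_pow]; ring_nf
          _ ≤ Real.exp (x ^ 2 / 8) * (A * Real.exp (-(5 / 16) * x ^ 2)) := by
              gcongr; exact hm x h
          _ = A * (Real.exp (x ^ 2 / 8) * Real.exp (-(5 / 16) * x ^ 2)) := by ring
          _ = _ := by rw [← Real.exp_add]; ring_nf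
    rw [integral_const_mul] at h2
    calc _ ≤ (2 ^ m * 3 ^ m) * ∫ x, |(U ℝ i).eval x * D x| := by gcongr
      _ ≤ _ := h2
      _ ≤ A * 5 := by gcongr
      _ = _ := by ring
  have hvU : ∀ j : ℕ, j ≤ m → ∫ x, (U ℝ j).eval x * v x = -∫ x, (U ℝ j).eval x * D x := by
    intro j hj
    have e : ∀ x, (U ℝ j).eval x * v x = ∑ i ∈ Finset.range (m + 1),
        a i * ((U ℝ i).eval x * (U ℝ j).eval x * Real.sqrt (1 - x ^ 2)) := by
      intro x
      simp only [hv, Finset.sum_mul, Finset.mul_sum]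
      apply Finset.sum_congr rfl
      intro i _
      ring
    simp_rw [e]
    rw [integral_finsetSum]
    · simp_rw [integral_const_mul, aux_orth]
      rw [Finset.sum_eq_single j]
      · simp [ha]
        have := Real.pi_ne_zero
        field_simp
      · intro i _ hij
        simp [hij]
      · intro h; simp at h; omega
    · intro i _
      apply Integrable.const_mul
      exact aux_int_sqrt _ (by fun_prop)
  have hL : ∀ p : Polynomial ℝ, Integrable fun x => p.eval x * (v x + D x) := by
    intro p
    simp only [mul_add]
    exact (hvi p).add (hDi p)
  have hU0 : ∀ j : ℕ, j ≤ m → ∫ x, (U ℝ j).eval x * (v x + D x) = 0 := by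
    intro j hj
    simp only [mul_add]
    rw [integral_add (hvi _) (hDi _), hvU j hj]; ring
  have hind : ∀ k j : ℕ, j + k ≤ m → ∫ x, x ^ k * (U ℝ j).eval x * (v x + D x) = 0 := by
    intro k
    induction k with
    | zero => intro j hj; simpa using hU0 j hj
    | succ k ih =>
      intro j hj
      have i1 := ih (j + 1) (by omega)
      have I : ∀ n : ℤ, Integrable fun x => x ^ k * (U ℝ n).eval x * (v x + D x) := by
        intro n
        refine (hL (Polynomial.X ^ k * U ℝ n)).congr (ae_of_all _ fun x => ?_)
        show Polynomial.eval x (Polynomial.X ^ k * U ℝ n) * (v x + D x) = _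
        rw [Polynomial.eval_mul, Polynomial.eval_pow, Polynomial.eval_X]
      have i2 : ∫ x, x ^ k * (U ℝ ((j : ℤ) - 1)).eval x * (v x + D x) = 0 := by
        rcases j with _ | j
        · simp
        · have := ih j (by omega)
          simpa using this
      have e : ∀ x, x ^ (k + 1) * (U ℝ j).eval x * (v x + D x) =
          1 / 2 * (x ^ k * (U ℝ ((j + 1 : ℕ) : ℤ)).eval x * (v x + D x)) +
          1 / 2 * (x ^ k * (U ℝ ((j : ℤ) - 1)).eval x * (v x + D x)) := by
        intro x
        have := congrArg (Polynomial.eval x) (U_add_one ℝ (j : ℤ))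
        simp at this
        push_cast
        rw [this]; ring
      simp_rw [e]
      rw [integral_add ((I _).const_mul _) ((I _).const_mul _), integral_const_mul,
        integral_const_mul, i1, i2]
      simp
  refine ⟨v, ?_, ?_, ?_, ?_, ?_⟩
  · fun_prop
  · intro x hx
    simp [hv, aux_sqrt_zero hx]
  · intro x
    rcases le_total 1 |x| with h | h
    · simp [hv, aux_sqrt_zero h]; exact hA
    · have hs : Real.sqrt (1 - x ^ 2) ≤ 1 := by
        apply Real.sqrt_le_one.mpr; nlinarith [sq_nonneg x]
      simp only [hv]
      rw [abs_mul, abs_of_nonneg (Real.sqrt_nonneg _)]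
      have h2m : ((m + 1 : ℕ) : ℝ) ≤ 2 ^ m := by
        have : m + 1 ≤ 2 ^ m := Nat.lt_two_pow_self
        exact_mod_cast this
      calc _ ≤ |∑ i ∈ Finset.range (m + 1), a i * (U ℝ i).eval x| * 1 := by gcongr
        _ ≤ ∑ i ∈ Finset.range (m + 1), |a i * (U ℝ i).eval x| := by
            rw [mul_one]; exact Finset.abs_sum_le_sum_abs _ _
        _ ≤ ∑ i ∈ Finset.range (m + 1), 5 * A / 2 ^ m := by
            apply Finset.sum_le_sum
            intro i hi
            have hi' : i ≤ m := by simpa [Nat.lt_succ_iff] using hi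
            have hU := aux_U_bound i x
            rw [max_eq_left h, mul_one] at hU
            have hU' : (3 : ℝ) ^ i ≤ 3 ^ m := pow_le_pow_right₀ (by norm_num) hi'
            rw [le_div_iff₀ (by positivity), abs_mul]
            calc |a i| * |(U ℝ i).eval x| * 2 ^ m ≤ |a i| * 3 ^ m * 2 ^ m := by
                  gcongr; exact hU.trans hU'
              _ = (2 ^ m * 3 ^ m) * |a i| := by ring
              _ ≤ _ := ha_bound i hi
        _ = ((m + 1 : ℕ) : ℝ) * (5 * A / 2 ^ m) := by simp
        _ ≤ 2 ^ m * (5 * A / 2 ^ m) := by gcongr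
        _ = 5 * A := by field_simp
  · intro k
    simpa using hvi (Polynomial.X ^ k)
  · intro k hk
    simpa using hind k 0 (by omega)

lemma aux_pow_bound (m : ℕ) (R : ℝ) (hR : 1 ≤ R) (h1 : (m : ℝ) ≤ R ^ 2 / 16)
    (h2 : m * Real.log (18 * R) ≤ R ^ 2 / 16) (x : ℝ) (hx : R ≤ |x|) :
    (18 * |x|) ^ m ≤ Real.exp (x ^ 2 / 8) := by
  have hR0 : 0 < R := by linarith
  set y := |x| / R with hy
  have hy1 : 1 ≤ y := by rw [hy, le_div_iff₀ hR0]; linarith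
  have hxy : |x| = R * y := by rw [hy]; field_simp
  have hx2 : x ^ 2 = R ^ 2 * y ^ 2 := by rw [← sq_abs, hxy]; ring
  have e1 : (18 * R) ^ m ≤ Real.exp (x ^ 2 / 16) := by
    rw [← Real.exp_log (show 0 < 18 * R by positivity), ← Real.exp_nat_mul]
    apply Real.exp_le_exp.mpr
    rw [hx2]; nlinarith [sq_nonneg R]
  have e2 : y ^ m ≤ Real.exp (x ^ 2 / 16) := by
    have : y ≤ Real.exp y := by linarith [Real.add_one_le_exp y]
    calc y ^ m ≤ Real.exp y ^ m := by gcongr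
      _ = Real.exp (m * y) := by rw [← Real.exp_nat_mul]
      _ ≤ _ := by
        apply Real.exp_le_exp.mpr
        rw [hx2]
        have : (m : ℝ) * y ≤ m * y ^ 2 := by gcongr; nlinarith
        nlinarith [sq_nonneg y]
  calc (18 * |x|) ^ m = (18 * R) ^ m * y ^ m := by rw [hxy, ← mul_pow]; ring
    _ ≤ Real.exp (x ^ 2 / 16) * Real.exp (x ^ 2 / 16) := by gcongr
    _ = _ := by rw [← Real.exp_add]; ring_nf

lemma aux_gauss_pos (x : ℝ) : 0 < gaussPDF x := by
  unfold gaussPDF; have := Real.pi_pos; positivity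

lemma aux_gauss_shift (x δ : ℝ) :
    gaussPDF (x - δ) = gaussPDF x * Real.exp (δ * x - δ ^ 2 / 2) := by
  unfold gaussPDF
  rw [div_mul_eq_mul_div, ← Real.exp_add]; ring_nf

lemma aux_gauss_le (x : ℝ) : gaussPDF x ≤ Real.exp (-(1 / 2) * x ^ 2) := by
  unfold gaussPDF
  have : 1 ≤ Real.sqrt (2 * Real.pi) := by
    rw [Real.one_le_sqrt]; linarith [Real.pi_gt_three]
  rw [show -x ^ 2 / 2 = -(1 / 2) * x ^ 2 by ring]
  exact div_le_self (Real.exp_pos _).le this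

lemma aux_gauss_ge (x : ℝ) (hx : |x| ≤ 1) : 1 / 6 ≤ gaussPDF x := by
  unfold gaussPDF
  have h3 : Real.sqrt (2 * Real.pi) ≤ 3 := by
    rw [Real.sqrt_le_iff]
    constructor
    · norm_num
    · linarith [Real.pi_lt_four]
  have hp : 0 < Real.sqrt (2 * Real.pi) := by have := Real.pi_pos; positivity
  have h2 : 1 / 2 ≤ Real.exp (-x ^ 2 / 2) := by
    have := Real.add_one_le_exp (-x ^ 2 / 2)
    have : x ^ 2 ≤ 1 := by rw [← sq_abs]; nlinarith [abs_nonneg x]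
    linarith
  rw [le_div_iff₀ hp]; linarith

lemma aux_gauss_cont : Continuous gaussPDF := by
  unfold gaussPDF; fun_prop

lemma aux_gauss_integral : ∫ x, gaussPDF x = 1 := by
  have h := ProbabilityTheory.integral_gaussianPDFReal_eq_one 0 (v := 1) one_ne_zero
  rw [← h]
  congr 1
  ext x
  simp [gaussPDF, ProbabilityTheory.gaussianPDFReal]
  ring

lemma aux_exp_sub_one (t : ℝ) : |Real.exp t - 1| ≤ |t| * Real.exp |t| := by
  rcases le_total 0 t with h | h
  · rw [abs_of_nonneg h, abs_of_nonneg (by linarith [Real.add_one_le_exp t])]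
    have h1 := Real.add_one_le_exp (-t)
    have h2 : Real.exp (-t) * Real.exp t = 1 := by rw [← Real.exp_add]; simp
    nlinarith [Real.exp_pos t]
  · rw [abs_of_nonpos h, abs_of_nonpos (by linarith [Real.exp_le_one_iff.mpr h])]
    have h1 := Real.add_one_le_exp t
    have h2 : 1 ≤ Real.exp (-t) := Real.one_le_exp (by linarith)
    nlinarith

lemma aux_D_bound (δ x : ℝ) (h0 : 0 < δ) (h1 : δ ≤ 1) (hx : 16 ≤ |x|) :
    |gaussPDF (x - δ) - gaussPDF x| ≤ 4 * δ * Real.exp (-(5 / 16) * x ^ 2) := by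
  set t := δ * x - δ ^ 2 / 2 with ht
  have htb : |t| ≤ 2 * δ * |x| := by
    calc |t| ≤ |δ * x| + |δ ^ 2 / 2| := abs_sub _ _
      _ = δ * |x| + δ ^ 2 / 2 := by
        rw [abs_mul, abs_of_pos h0, abs_of_nonneg (by positivity : 0 ≤ δ ^ 2 / 2)]
      _ ≤ _ := by nlinarith
  have hx2 : |x| ^ 2 = x ^ 2 := sq_abs x
  have htx : |t| ≤ x ^ 2 / 8 := by nlinarith
  have hxe : |x| ≤ 2 * Real.exp (x ^ 2 / 16) := by
    have := Real.add_one_le_exp (x ^ 2 / 16)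
    nlinarith [sq_nonneg (|x| - 4)]
  rw [aux_gauss_shift, ← ht, show gaussPDF x * Real.exp t - gaussPDF x =
    gaussPDF x * (Real.exp t - 1) by ring, abs_mul, abs_of_pos (aux_gauss_pos x)]
  calc gaussPDF x * |Real.exp t - 1| ≤ Real.exp (-(1 / 2) * x ^ 2) *
        ((2 * δ * (2 * Real.exp (x ^ 2 / 16))) * Real.exp (x ^ 2 / 8)) := by
        gcongr
        · exact aux_gauss_le x
        · refine (aux_exp_sub_one t).trans ?_
          gcongr
          refine htb.trans ?_
          gcongr
    _ = 4 * δ * (Real.exp (-(1 / 2) * x ^ 2) * Real.exp (x ^ 2 / 16) * Real.exp (x ^ 2 / 8)) := by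
        ring
    _ = _ := by rw [← Real.exp_add, ← Real.exp_add]; ring_nf

lemma aux_main (m : ℕ) (ε δ R : ℝ) (hε0 : 0 < ε) (hε1 : ε < 1) (hδ0 : 0 < δ)
    (hδ : 8192 * δ < ε) (hRδ : 16 * δ * R = ε)
    (h1 : (m : ℝ) ≤ R ^ 2 / 16) (h2 : m * Real.log (18 * R) ≤ R ^ 2 / 16) :
    ∃ f : ℝ → ℝ, Measurable f ∧
      (∀ x : ℝ, (1 - ε) * gaussPDF (x - δ) ≤ f x ∧ f x ≤ gaussPDF (x - δ)) ∧
      ∀ i : ℕ, i ≤ m →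
        (∫ x : ℝ, x ^ i * f x) / (∫ x : ℝ, f x) = ∫ z : ℝ, z ^ i * gaussPDF z := by
  have hR : 512 ≤ R := by
    by_contra h
    push Not at h
    nlinarith
  set C := 1 - ε / 2 with hC
  have hC0 : 0 < C := by linarith
  set D : ℝ → ℝ := fun x => if |x| ≤ R then 0 else C * (gaussPDF (x - δ) - gaussPDF x) with hDdef
  have hgc := aux_gauss_cont
  have hDm : Measurable D := by
    refine Measurable.ite (measurableSet_le (by fun_prop) (by fun_prop)) (by fun_prop) ?_
    exact (Continuous.measurable (by fun_prop))
  have hDA : ∀ x, |D x| ≤ 4 * δ * Real.exp (-(5 / 16) * x ^ 2) := by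
    intro x
    simp only [hDdef]
    split_ifs with h
    · simp; positivity
    · push Not at h
      rw [abs_mul, abs_of_pos hC0]
      have := aux_D_bound δ x hδ0 (by linarith) (by linarith)
      have h' := abs_nonneg (gaussPDF (x - δ) - gaussPDF x)
      nlinarith
  obtain ⟨v, hvc, hv0, hvb, hvi, hvm⟩ := aux_core m D hDm (4 * δ) R (by positivity) (by linarith)
    hDA (fun x hx => by simp [hDdef, hx]) (aux_pow_bound m R (by linarith) h1 h2)
  have hvg : ∀ x, |v x| ≤ ε / 8 * gaussPDF x := by
    intro x
    rcases le_total 1 |x| with h | h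
    · rw [hv0 x h]; simp; have := aux_gauss_pos x; positivity
    · have := aux_gauss_ge x h
      have := hvb x
      nlinarith
  have hgi : ∀ k : ℕ, Integrable fun x => x ^ k * gaussPDF x := by
    intro k
    have := aux_int_bdd (Polynomial.X ^ k) (b := 1 / 2) (A := 1) (by norm_num) gaussPDF
      hgc.measurable (fun x => by
        rw [abs_of_pos (aux_gauss_pos x), one_mul]; exact aux_gauss_le x)
    simpa using this
  have hDi : ∀ k : ℕ, Integrable fun x => x ^ k * D x := by
    intro k
    have := aux_int_bdd (Polynomial.X ^ k) (by norm_num) D hDm hDA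
    simpa using this
  have hmom : ∀ i : ℕ, i ≤ m → ∫ x : ℝ, x ^ i * (C * gaussPDF x + (v x + D x)) =
      C * ∫ z : ℝ, z ^ i * gaussPDF z := by
    intro i hi
    have e : ∀ x : ℝ, x ^ i * (C * gaussPDF x + (v x + D x)) =
        C * (x ^ i * gaussPDF x) + x ^ i * (v x + D x) := fun x => by ring
    simp_rw [e]
    rw [integral_add ((hgi i).const_mul C), hvm i hi, integral_const_mul, add_zero]
    simp only [mul_add]
    exact (hvi i).add (hDi i)
  refine ⟨fun x => C * gaussPDF x + (v x + D x), ?_, ?_, ?_⟩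
  · exact (hgc.measurable.const_mul C).add (hvc.measurable.add hDm)
  · intro x
    have hg := aux_gauss_pos x
    have hg' := aux_gauss_pos (x - δ)
    show _ ≤ C * gaussPDF x + (v x + D x) ∧ C * gaussPDF x + (v x + D x) ≤ _
    by_cases h : |x| ≤ R
    · have hD : D x = 0 := by simp [hDdef, h]
      rw [hD, add_zero, aux_gauss_shift]
      set t := δ * x - δ ^ 2 / 2 with ht
      have hvx := abs_le.mp (hvg x)
      have hxx := abs_le.mp h
      have ht1 : t ≤ ε / 8 := by nlinarith
      have ht2 : -(ε / 8) ≤ t := by nlinarith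
      have e1 : 1 - ε / 8 ≤ Real.exp t := by linarith [Real.add_one_le_exp t]
      have e2 : (1 - ε / 8) * Real.exp t ≤ 1 := by
        have a1 := Real.add_one_le_exp (-t)
        have a2 : Real.exp (-t) * Real.exp t = 1 := by rw [← Real.exp_add]; simp
        nlinarith [Real.exp_pos t]
      have e3 : (1 - ε) * Real.exp t ≤ 1 - 5 * ε / 8 := by
        have : (1 - ε) ≤ (1 - 5 * ε / 8) * (1 - ε / 8) := by nlinarith
        nlinarith [Real.exp_pos t]
      constructor
      · calc (1 - ε) * (gaussPDF x * Real.exp t) = gaussPDF x * ((1 - ε) * Real.exp t) := by ring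
          _ ≤ gaussPDF x * (1 - 5 * ε / 8) := by gcongr
          _ ≤ _ := by rw [hC]; linarith
      · calc C * gaussPDF x + v x ≤ gaussPDF x * (1 - ε / 8) := by rw [hC]; nlinarith
          _ ≤ _ := by gcongr
    · have hD : D x = C * (gaussPDF (x - δ) - gaussPDF x) := by simp [hDdef, h]
      rw [hD, hv0 x (by linarith)]
      rw [show C * gaussPDF x + (0 + C * (gaussPDF (x - δ) - gaussPDF x)) = C * gaussPDF (x - δ)
        by ring, hC]
      constructor <;> nlinarith
  · intro i hi
    have h0 := hmom 0 (Nat.zero_le _)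
    simp only [pow_zero, one_mul, aux_gauss_integral, mul_one] at h0
    simp only
    rw [hmom i hi, h0]
    field_simp

/-- There is an absolute constant `c > 0` such that for all `ε ∈ (0,1)` and `δ ∈ (0, cε)`,
setting `γ = (1/δ)·log(1 + (ε/2)/(1−ε/2))` and `m = ⌊c·γ²/log γ⌋`, there exists an
`ε`-corruption `f` of the density of `N(δ,1)` whose visible-sample distribution matches
the first `m` moments of `N(0,1)`. -/
theorem stmt0 :
    ∃ c : ℝ, 0 < c ∧
      ∀ ε δ : ℝ, ε ∈ Set.Ioo (0 : ℝ) 1 → δ ∈ Set.Ioo 0 (c * ε) →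
        ∃ f : ℝ → ℝ, Measurable f ∧
          (∀ x : ℝ, (1 - ε) * gaussPDF (x - δ) ≤ f x ∧ f x ≤ gaussPDF (x - δ)) ∧
          ∀ i : ℕ, 1 ≤ i →
            i ≤ ⌊c * ((1 / δ) * Real.log (1 + (ε / 2) / (1 - ε / 2))) ^ 2 /
                  Real.log ((1 / δ) * Real.log (1 + (ε / 2) / (1 - ε / 2)))⌋₊ →
            (∫ x : ℝ, x ^ i * f x) / (∫ x : ℝ, f x) = ∫ z : ℝ, z ^ i * gaussPDF z := by
  refine ⟨1 / 8192, by norm_num, ?_⟩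
  rintro ε δ ⟨hε0, hε1⟩ ⟨hδ0, hδ⟩
  set g := (1 / δ) * Real.log (1 + (ε / 2) / (1 - ε / 2)) with hg
  set R := ε / (16 * δ) with hR
  have hRδ : 16 * δ * R = ε := by rw [hR]; field_simp
  have hR512 : 512 ≤ R := by rw [hR, le_div_iff₀ (by positivity)]; linarith
  have hb : 0 < 1 - ε / 2 := by linarith
  have hlog1 : Real.log (1 + (ε / 2) / (1 - ε / 2)) ≤ ε := by
    have h1 := Real.log_le_sub_one_of_pos (x := 1 + (ε / 2) / (1 - ε / 2)) (by positivity)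
    have h2 : (ε / 2) / (1 - ε / 2) ≤ ε := by
      rw [div_le_iff₀ hb]; nlinarith
    linarith
  have hlog2 : ε / 2 ≤ Real.log (1 + (ε / 2) / (1 - ε / 2)) := by
    have e : 1 + (ε / 2) / (1 - ε / 2) = (1 - ε / 2)⁻¹ := by
      apply eq_inv_of_mul_eq_one_left
      rw [add_mul, div_mul_cancel₀ _ hb.ne']; ring
    rw [e, Real.log_inv]
    linarith [Real.log_le_sub_one_of_pos hb]
  have hg1 : g ≤ 16 * R := by
    rw [hg, hR]
    calc 1 / δ * Real.log (1 + (ε / 2) / (1 - ε / 2)) ≤ 1 / δ * ε := by gcongr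
      _ = _ := by field_simp
  have hg2 : 8 * R ≤ g := by
    rw [hg, hR]
    calc 8 * (ε / (16 * δ)) = 1 / δ * (ε / 2) := by field_simp; norm_num
      _ ≤ _ := by gcongr
  have hlg : Real.log (18 * R) ≤ 2 * Real.log g := by
    rw [← Real.log_rpow (by linarith)]
    apply Real.log_le_log (by linarith)
    rw [Real.rpow_two]
    nlinarith
  have hl1 : 1 ≤ Real.log (18 * R) := by
    rw [Real.le_log_iff_exp_le (by linarith)]
    linarith [Real.exp_one_lt_d9]
  have hlgp : 0 < Real.log g := by linarith
  set m := ⌊1 / 8192 * g ^ 2 / Real.log g⌋₊ with hm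
  have hmle : (m : ℝ) * Real.log g ≤ 1 / 8192 * g ^ 2 := by
    rw [← le_div_iff₀ hlgp]
    exact Nat.floor_le (by positivity)
  have hgg : g ^ 2 ≤ 256 * R ^ 2 := by nlinarith
  have h2 : m * Real.log (18 * R) ≤ R ^ 2 / 16 := by
    have : (m : ℝ) * Real.log (18 * R) ≤ m * (2 * Real.log g) := by gcongr
    linarith
  have h1 : (m : ℝ) ≤ R ^ 2 / 16 := by
    have : (m : ℝ) * 1 ≤ m * Real.log (18 * R) := by gcongr
    linarith
  obtain ⟨f, hf1, hf2, hf3⟩ := aux_main m ε δ R hε0 hε1 hδ0 (by linarith) hRδ h1 h2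
  exact ⟨f, hf1, hf2, fun i _ hi => hf3 i hi⟩
end

section
/- There exists an absolute constant C > 0 such that for every ε ∈ (0,1), every δ ∈ (0, √(log(1 + ε/(1−ε)))), every τ ∈ (0,1), and every positive integer n with n ≥ exp(C·((1/δ)·log(1 + ε/(1−ε)))²)·log(1/τ)/(ε²·(1−ε)), there exists a measurable function A : (ℝ ∪ {⊥})ⁿ → ℝ such that for every μ ∈ ℝ and every ε-corrupted version Q of N(μ,1), Pr_{(x₁,…,xₙ)∼Q^⊗n}[|A(x₁,…,xₙ) − μ| ≤ δ] ≥ 1 − τ. -/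
open MeasureTheory

/-- Measurable space structure on `Option α`: a set is measurable iff its preimage
under `some` is measurable. -/
instance optionMeasurableSpace {α : Type*} [m : MeasurableSpace α] :
    MeasurableSpace (Option α) := m.map some

/-- `Q` is an `ε`-corrupted version (realizable `ε`-contamination model) of the
distribution on `ℝ` with density `p`. -/
def IsCorruptedVersion (ε : ℝ) (p : ℝ → ℝ) (Q : Measure (Option ℝ)) : Prop :=
  IsProbabilityMeasure Q ∧
  ∃ f : ℝ → ℝ, Measurable f ∧ (∀ x : ℝ, (1 - ε) * p x ≤ f x ∧ f x ≤ p x) ∧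
    (∀ A : Set ℝ, MeasurableSet A → Q (Option.some '' A) = ENNReal.ofReal (∫ x in A, f x)) ∧
    Q {none} = ENNReal.ofReal (1 - ∫ x : ℝ, f x)



open ProbabilityTheory

section Helpers

/-- Hoeffding's inequality for i.i.d. sums under a product measure. -/
lemma hoeffding_pi {α : Type*} [MeasurableSpace α] (Q : Measure α) [IsProbabilityMeasure Q]
    (g : α → ℝ) (hg : Measurable g) (a : ℝ) (hga : ∀ x, g x ∈ Set.Icc a (a + 1)) (n : ℕ)
    (hn : 0 < n) (t : ℝ) (ht : 0 ≤ t) :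
    (Measure.pi fun _ : Fin n => Q).real {v | n * (∫ x, g x ∂Q) + n * t ≤ ∑ i, g (v i)} ≤
      Real.exp (-(2 * n * t ^ 2)) := by
  have hsub : HasSubgaussianMGF (fun x => g x - ∫ x, g x ∂Q) ((‖(a + 1) - a‖₊ / 2) ^ 2) Q :=
    hasSubgaussianMGF_of_mem_Icc hg.aemeasurable (Filter.Eventually.of_forall hga)
  have hind : iIndepFun (fun (i : Fin n) (v : Fin n → α) => g (v i) - ∫ x, g x ∂Q)
      (Measure.pi fun _ : Fin n => Q) :=
    iIndepFun_pi (X := fun _ x => g x - ∫ x, g x ∂Q) (fun i => (hg.sub_const _).aemeasurable)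
  have h1 : ∀ i ∈ (Finset.univ : Finset (Fin n)),
      HasSubgaussianMGF (fun (v : Fin n → α) => g (v i) - ∫ x, g x ∂Q)
        ((‖(a + 1) - a‖₊ / 2) ^ 2) (Measure.pi fun _ : Fin n => Q) := by
    intro i _
    have hmp := measurePreserving_eval (fun _ : Fin n => Q) i
    refine HasSubgaussianMGF.of_map (X := fun x => g x - ∫ x, g x ∂Q) (Y := Function.eval i)
      hmp.measurable.aemeasurable ?_
    rw [hmp.map_eq]; exact hsub
  have h2 := HasSubgaussianMGF.measure_sum_ge_le_of_iIndepFun hind h1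
    (ε := n * t) (by positivity)
  have hn' : (0:ℝ) < n := by exact_mod_cast hn
  have e1 : {v : Fin n → α | n * (∫ x, g x ∂Q) + n * t ≤ ∑ i, g (v i)} =
      {v | n * t ≤ ∑ i, (g (v i) - ∫ x, g x ∂Q)} := by
    ext v
    simp only [Set.mem_ofPred_eq, Finset.sum_sub_distrib, Finset.sum_const, Finset.card_univ,
      Fintype.card_fin, nsmul_eq_mul]
    constructor <;> intro h <;> linarith
  rw [e1]
  refine h2.trans (le_of_eq ?_)
  congr 1
  simp
  field_simp
  try norm_num

lemma measurable_option_iff {β : Type*} [MeasurableSpace β] (g : Option ℝ → β) :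
    Measurable g ↔ Measurable (fun x : ℝ => g (some x)) := by
  constructor
  · intro h s hs
    exact h hs
  · intro h s hs
    exact h hs

/-- Indicator that the sample is a real number exceeding `r`. -/
noncomputable def exceed (r : ℝ) (o : Option ℝ) : ℝ :=
  Set.indicator (some '' Set.Ioi r) (fun _ => (1:ℝ)) o

lemma measurableSet_some_image {A : Set ℝ} (hA : MeasurableSet A) :
    MeasurableSet (some '' A : Set (Option ℝ)) := by
  change MeasurableSet (some ⁻¹' (some '' A))
  rwa [Set.preimage_image_eq _ (Option.some_injective _)]

lemma measurable_exceed (r : ℝ) : Measurable (exceed r) :=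
  measurable_const.indicator (measurableSet_some_image measurableSet_Ioi)

lemma exceed_mem (r : ℝ) (o : Option ℝ) : exceed r o ∈ Set.Icc (0:ℝ) 1 := by
  unfold exceed
  by_cases h : o ∈ (some '' Set.Ioi r : Set (Option ℝ)) <;> simp [h]

lemma exceed_anti {r s : ℝ} (h : r ≤ s) (o : Option ℝ) : exceed s o ≤ exceed r o := by
  unfold exceed
  apply Set.indicator_le_indicator_of_subset
  · exact Set.image_mono (Set.Ioi_subset_Ioi h)
  · intro _; norm_num

/-- Gaussian upper tail. -/
noncomputable def gTail (y : ℝ) : ℝ := ∫ x in Set.Ioi y, gaussPDF x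

lemma gaussPDF_eq : gaussPDF = gaussianPDFReal 0 1 := by
  funext x
  simp [gaussPDF, gaussianPDFReal]
  ring

lemma gaussPDF_nonneg (x : ℝ) : 0 ≤ gaussPDF x := by unfold gaussPDF; positivity

lemma gaussPDF_integrable : Integrable gaussPDF := by
  rw [gaussPDF_eq]; exact integrable_gaussianPDFReal 0 1

lemma gaussPDF_measurable : Measurable gaussPDF := by
  rw [gaussPDF_eq]; exact measurable_gaussianPDFReal 0 1

lemma gTail_shift (t m : ℝ) : ∫ x in Set.Ioi t, gaussPDF (x - m) = gTail (t - m) := by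
  unfold gTail
  rw [← integral_indicator measurableSet_Ioi, ← integral_indicator measurableSet_Ioi,
    ← integral_sub_right_eq_self ((Set.Ioi (t - m)).indicator fun x => gaussPDF x) m]
  congr 1
  funext x
  simp only [Set.indicator, Set.mem_Ioi, sub_lt_sub_iff_right]

lemma gTail_nonneg (y : ℝ) : 0 ≤ gTail y := integral_nonneg (fun x => gaussPDF_nonneg x)

lemma gTail_anti {x y : ℝ} (h : x ≤ y) : gTail y ≤ gTail x := by
  unfold gTail
  exact setIntegral_mono_set gaussPDF_integrable.integrableOn
    (Filter.Eventually.of_forall fun x => gaussPDF_nonneg x)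
    (Set.Ioi_subset_Ioi h).eventuallyLE

/-- Gaussian tail ratio. -/
lemma gTail_ratio (y w : ℝ) (hw : 0 ≤ w) :
    Real.exp (w * y - w ^ 2 / 2) * gTail y ≤ gTail (y - w) := by
  rw [← gTail_shift y w]
  unfold gTail
  rw [← integral_const_mul]
  apply setIntegral_mono_on
  · exact (gaussPDF_integrable.const_mul _).integrableOn
  · exact (gaussPDF_integrable.comp_sub_right w).integrableOn
  · exact measurableSet_Ioi
  · intro x hx
    unfold gaussPDF
    rw [← mul_div_assoc, ← Real.exp_add]
    gcongr
    have : w * y ≤ w * x := mul_le_mul_of_nonneg_left (le_of_lt hx) hw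
    nlinarith

lemma sqrt_two_pi_le : Real.sqrt (2 * Real.pi) ≤ Real.exp 1 := by
  rw [Real.sqrt_le_left (Real.exp_pos 1).le]
  have := Real.exp_one_gt_d9
  have := Real.pi_lt_d2
  nlinarith

/-- Pointwise lower bound on the Gaussian density. -/
lemma gaussPDF_lower {x y : ℝ} (h : |x| ≤ y) : Real.exp (-y ^ 2 / 2 - 1) ≤ gaussPDF x := by
  unfold gaussPDF
  rw [Real.exp_sub]
  have h2 : x ^ 2 ≤ y ^ 2 := by
    rw [← sq_abs x]; exact pow_le_pow_left₀ (abs_nonneg x) h 2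
  have : 0 < Real.sqrt (2 * Real.pi) := by positivity
  gcongr
  exact sqrt_two_pi_le

lemma gTail_lower (y : ℝ) (hy : 0 ≤ y) : Real.exp (-(y + 1) ^ 2 / 2 - 1) ≤ gTail y := by
  have h1 : ∫ x in Set.Ioc y (y + 1), Real.exp (-(y + 1) ^ 2 / 2 - 1) ≤
      ∫ x in Set.Ioc y (y + 1), gaussPDF x := by
    apply setIntegral_mono_on
    · exact integrableOn_const (by simp)
    · exact gaussPDF_integrable.integrableOn
    · exact measurableSet_Ioc
    · intro x hx
      apply gaussPDF_lower
      rw [abs_of_nonneg (by linarith [hx.1])]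
      exact hx.2
  have h2 : ∫ x in Set.Ioc y (y + 1), gaussPDF x ≤ gTail y := by
    unfold gTail
    exact setIntegral_mono_set gaussPDF_integrable.integrableOn
      (Filter.Eventually.of_forall fun x => gaussPDF_nonneg x)
      (Set.Ioc_subset_Ioi_self).eventuallyLE
  simp at h1
  linarith

lemma corrupted_bounds {ε m : ℝ} {Q : Measure (Option ℝ)}
    (hε : ε ∈ Set.Ioo (0:ℝ) 1)
    (hQ : IsCorruptedVersion ε (fun x => gaussPDF (x - m)) Q) {A : Set ℝ} (hA : MeasurableSet A) :
    (1 - ε) * ∫ x in A, gaussPDF (x - m) ≤ Q.real (some '' A) ∧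
      Q.real (some '' A) ≤ ∫ x in A, gaussPDF (x - m) := by
  obtain ⟨_, f, hfm, hf, hfA, _⟩ := hQ
  have hp : Integrable (fun x => gaussPDF (x - m)) := gaussPDF_integrable.comp_sub_right m
  have hf0 : ∀ x, 0 ≤ f x := fun x =>
    (mul_nonneg (by linarith [hε.2]) (gaussPDF_nonneg _)).trans (hf x).1
  have hfi : Integrable f := by
    refine hp.mono' hfm.aestronglyMeasurable (Filter.Eventually.of_forall fun x => ?_)
    rw [Real.norm_of_nonneg (hf0 x)]
    exact (hf x).2
  have e : Q.real (some '' A) = ∫ x in A, f x := by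
    rw [Measure.real, hfA A hA, ENNReal.toReal_ofReal (integral_nonneg hf0)]
  rw [e, ← integral_const_mul]
  exact ⟨setIntegral_mono (hp.const_mul _).integrableOn hfi.integrableOn fun x => (hf x).1,
    setIntegral_mono hfi.integrableOn hp.integrableOn fun x => (hf x).2⟩

lemma integral_exceed (Q : Measure (Option ℝ)) (r : ℝ) :
    ∫ o, exceed r o ∂Q = Q.real (some '' Set.Ioi r) := by
  unfold exceed
  rw [integral_indicator (measurableSet_some_image measurableSet_Ioi)]
  simp

/-- A window around a point near the mean has mass comparable to its length. -/
lemma window_bound {ε m c h : ℝ} {Q : Measure (Option ℝ)}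
    (hε : ε ∈ Set.Ioo (0:ℝ) 1)
    (hQ : IsCorruptedVersion ε (fun x => gaussPDF (x - m)) Q) (hc : |c - m| ≤ 1)
    (h0 : 0 ≤ h) (h1 : h ≤ 1) :
    (1 - ε) * (2 * h * Real.exp (-3)) ≤ Q.real (some '' Set.Icc (c - h) (c + h)) := by
  refine le_trans ?_ (corrupted_bounds hε hQ measurableSet_Icc).1
  apply mul_le_mul_of_nonneg_left _ (by linarith [hε.2])
  have h1 : ∫ x in Set.Icc (c - h) (c + h), Real.exp (-3) ≤
      ∫ x in Set.Icc (c - h) (c + h), gaussPDF (x - m) := by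
    apply setIntegral_mono_on
    · exact integrableOn_const (by simp)
    · exact (gaussPDF_integrable.comp_sub_right m).integrableOn
    · exact measurableSet_Icc
    · intro x hx
      have := @gaussPDF_lower (x - m) 2 (by
        rw [abs_le] at hc ⊢
        constructor <;> linarith [hx.1, hx.2])
      norm_num at this
      exact this
  simp [h0] at h1
  linarith

/-- Value in the supremum defining the empirical quantile. -/
noncomputable def quantTerm (n : ℕ) (q : ℝ) (v : Fin n → Option ℝ) (r : ℚ) : EReal :=
  open Classical in if n * q ≤ ∑ i, exceed r (v i) then ((r:ℝ) : EReal) else ⊥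

/-- Empirical upper quantile. -/
noncomputable def uQuant (n : ℕ) (q : ℝ) (v : Fin n → Option ℝ) : ℝ :=
  EReal.toReal (⨆ r : ℚ, quantTerm n q v r)

lemma measurable_uQuant (n : ℕ) (q : ℝ) : Measurable (uQuant n q) := by
  unfold uQuant
  refine measurable_ereal_toReal.comp (Measurable.iSup fun r => ?_)
  unfold quantTerm
  refine Measurable.ite ?_ measurable_const measurable_const
  refine measurableSet_le measurable_const ?_
  exact Finset.measurable_sum _ fun i _ => (measurable_exceed r).comp (measurable_pi_apply i)

lemma uQuant_mem (n : ℕ) (q a b : ℝ) (v : Fin n → Option ℝ)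
    (ha : n * q ≤ ∑ i, exceed a (v i)) (hb : ∑ i, exceed b (v i) < n * q) :
    a ≤ uQuant n q v ∧ uQuant n q v ≤ b := by
  have h1 : (⨆ r : ℚ, quantTerm n q v r) ≤ (b : EReal) := by
    refine iSup_le fun r => ?_
    unfold quantTerm
    split_ifs with h
    · by_contra hc
      push Not at hc
      have hc' : b < (r:ℝ) := by exact_mod_cast hc
      have : ∑ i, exceed r (v i) ≤ ∑ i, exceed b (v i) :=
        Finset.sum_le_sum fun i _ => exceed_anti hc'.le _
      linarith
    · exact bot_le
  have h2 : (a : EReal) ≤ (⨆ r : ℚ, quantTerm n q v r) := by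
    refine le_of_forall_lt fun c hc => ?_
    obtain ⟨r, hr1, hr2⟩ := EReal.lt_iff_exists_rat_btwn.1 hc
    refine hr1.trans_le (le_trans ?_ (le_iSup _ r))
    have hr2' : (r:ℝ) < a := by exact_mod_cast hr2
    unfold quantTerm
    rw [if_pos (ha.trans (Finset.sum_le_sum fun i _ => exceed_anti hr2'.le _))]
  unfold uQuant
  have hb' : (⨆ r : ℚ, quantTerm n q v r) ≠ ⊤ := ne_top_of_le_ne_top (EReal.coe_ne_top b) h1
  have ha' : (⨆ r : ℚ, quantTerm n q v r) ≠ ⊥ := ne_bot_of_le_ne_bot (EReal.coe_ne_bot a) h2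
  constructor
  · have := EReal.toReal_le_toReal h2 (EReal.coe_ne_bot a) hb'
    simpa using this
  · have := EReal.toReal_le_toReal h1 ha' (EReal.coe_ne_top b)
    simpa using this

/-- The exponential rate of the quantile estimator. -/
noncomputable def rate (L s : ℝ) : ℝ := (min 1 s) ^ 2 * Real.exp (-15 - 4 * (L / s) ^ 2)

/-- Gap between population quantile levels. -/
lemma gap_bound {ε L s : ℝ} (hL : 1 - ε = Real.exp (-L)) (hL0 : 0 < L) (hs : 0 < s)
    (hLs : L ≤ (L / s) ^ 2 + 1) :
    min 1 s * Real.exp (-7 - 2 * (L / s) ^ 2) ≤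
      (1 - ε) * gTail (L / s + 1 - s) - gTail (L / s + 1 + s) := by
  set u := L / s with hu
  have hu0 : 0 < u := div_pos hL0 hs
  have hus : u * s = L := div_mul_cancel₀ L hs.ne'
  have h1 := gTail_ratio (u + 1 + s) (2 * s) (by linarith)
  have e1 : 2 * s * (u + 1 + s) - (2 * s) ^ 2 / 2 = 2 * L + 2 * s := by rw [← hus]; ring
  have e2 : u + 1 + s - 2 * s = u + 1 - s := by ring
  rw [e1, e2] at h1
  set Gm := gTail (u + 1 - s)
  set Gp := gTail (u + 1 + s)
  have hGp : Gp ≤ Real.exp (-(2 * L + 2 * s)) * Gm := by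
    rw [Real.exp_neg, inv_mul_eq_div, le_div_iff₀ (Real.exp_pos _)]
    linarith
  have hGm : Real.exp (-(u + 2) ^ 2 / 2 - 1) ≤ Gm := by
    have := (gTail_lower (u + 1) (by linarith)).trans
      (gTail_anti (show u + 1 - s ≤ u + 1 by linarith))
    rwa [show u + 1 + 1 = u + 2 by ring] at this
  have hGm0 : 0 ≤ Gm := gTail_nonneg _
  have hq : Real.exp (-6 - 2 * u ^ 2) ≤ (1 - ε) * Gm := by
    rw [hL]
    calc Real.exp (-6 - 2 * u ^ 2) ≤ Real.exp (-L) * Real.exp (-(u + 2) ^ 2 / 2 - 1) := by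
          rw [← Real.exp_add]
          apply Real.exp_le_exp.2
          nlinarith [sq_nonneg (u - 2)]
      _ ≤ _ := by gcongr
  have hd1 : min 1 s ≤ 1 := min_le_left _ _
  have hd2 : min 1 s ≤ s := min_le_right _ _
  have hd0 : 0 < min 1 s := lt_min one_pos hs
  set d := min 1 s
  have hexp : d / 2 ≤ 1 - Real.exp (-(2 * s)) := by
    have h3 : Real.exp (-(2 * s)) ≤ 1 / (1 + 2 * d) := by
      rw [Real.exp_neg, ← one_div]
      apply one_div_le_one_div_of_le (by linarith)
      have := Real.add_one_le_exp (2 * s)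
      linarith
    have h4 : 1 / (1 + 2 * d) ≤ 1 - d / 2 := by
      rw [div_le_iff₀ (by linarith)]
      nlinarith
    linarith
  have h5 : Gp ≤ (1 - ε) * Gm * Real.exp (-(2 * s)) := by
    refine hGp.trans ?_
    rw [hL]
    have : Real.exp (-(2 * L + 2 * s)) ≤ Real.exp (-L) * Real.exp (-(2 * s)) := by
      rw [← Real.exp_add]; apply Real.exp_le_exp.2; linarith
    nlinarith
  have h6 : Real.exp (-7 - 2 * u ^ 2) ≤ Real.exp (-6 - 2 * u ^ 2) / 2 := by
    have : Real.exp (-7 - 2 * u ^ 2) = Real.exp (-6 - 2 * u ^ 2) / Real.exp 1 := by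
      rw [← Real.exp_sub]; congr 1; ring
    rw [this]
    gcongr
    linarith [Real.exp_one_gt_d9]
  calc d * Real.exp (-7 - 2 * u ^ 2) ≤ d * (Real.exp (-6 - 2 * u ^ 2) / 2) := by gcongr
    _ = Real.exp (-6 - 2 * u ^ 2) * (d / 2) := by ring
    _ ≤ (1 - ε) * Gm * (1 - Real.exp (-(2 * s))) := by
        apply mul_le_mul hq hexp (by positivity)
        exact (Real.exp_pos _).le.trans hq
    _ ≤ _ := by linarith

/-- The quantile estimator. -/
lemma quant_estimator {ε L s : ℝ} (hε : ε ∈ Set.Ioo (0:ℝ) 1) (hL : 1 - ε = Real.exp (-L))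
    (hL0 : 0 < L) (hs : 0 < s) (hLs : L ≤ (L / s) ^ 2 + 1) (n : ℕ) (hn : 0 < n) :
    ∃ A : (Fin n → Option ℝ) → ℝ, Measurable A ∧ ∀ (m : ℝ) (Q : Measure (Option ℝ)),
      IsCorruptedVersion ε (fun x => gaussPDF (x - m)) Q →
      1 - 2 * Real.exp (-(rate L s * n)) ≤
        (Measure.pi fun _ : Fin n => Q).real {v | |A v - m| ≤ s} := by
  have hgap := gap_bound hL hL0 hs hLs
  set y := L / s + 1 with hy
  set qp := (1 - ε) * gTail (y - s)
  set qm := gTail (y + s)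
  set q := (qp + qm) / 2 with hq
  set t := (qp - qm) / 2 with ht
  have hd0 : 0 < min 1 s := lt_min one_pos hs
  have ht0 : 0 ≤ t := by
    have : 0 ≤ min 1 s * Real.exp (-7 - 2 * (L / s) ^ 2) := by positivity
    rw [ht]; linarith
  have hrate : rate L s ≤ 2 * t ^ 2 := by
    have h1 : (min 1 s * Real.exp (-7 - 2 * (L / s) ^ 2)) ^ 2 ≤ (2 * t) ^ 2 := by
      apply pow_le_pow_left₀ (by positivity)
      rw [ht]; linarith
    have h2 : rate L s * 2 ≤ (min 1 s * Real.exp (-7 - 2 * (L / s) ^ 2)) ^ 2 := by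
      unfold rate
      rw [mul_pow, mul_assoc, ← Real.exp_nat_mul]
      apply mul_le_mul_of_nonneg_left _ (sq_nonneg _)
      have e : ((2:ℕ):ℝ) * (-7 - 2 * (L / s) ^ 2) = (-15 - 4 * (L / s) ^ 2) + 1 := by
        push_cast; ring
      rw [e, Real.exp_add]
      gcongr
      linarith [Real.exp_one_gt_d9]
    nlinarith
  refine ⟨fun v => uQuant n q v - y, (measurable_uQuant n q).sub_const _, ?_⟩
  intro m Q hQ
  have := hQ.1
  have hn' : (0:ℝ) < n := by exact_mod_cast hn
  set P := Measure.pi fun _ : Fin n => Q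
  have hmE : MeasurableSet {v : Fin n → Option ℝ | |uQuant n q v - y - m| ≤ s} := by
    apply measurableSet_le _ measurable_const
    exact (((measurable_uQuant n q).sub_const _).sub_const _).abs
  set E := {v : Fin n → Option ℝ | |uQuant n q v - y - m| ≤ s}
  have hp1 := (corrupted_bounds hε hQ (measurableSet_Ioi (a := m + y + s))).2
  have hp2 := (corrupted_bounds hε hQ (measurableSet_Ioi (a := m + y - s))).1
  rw [gTail_shift, ← integral_exceed] at hp1 hp2
  rw [show m + y + s - m = y + s by ring] at hp1
  rw [show m + y - s - m = y - s by ring] at hp2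
  have hH1 := hoeffding_pi Q (exceed (m + y + s)) (measurable_exceed _) 0
    (fun x => by simpa using exceed_mem _ x) n hn t ht0
  have hH2 := hoeffding_pi Q (fun o => - exceed (m + y - s) o) (measurable_exceed _).neg (-1)
    (fun x => by
      have := exceed_mem (m + y - s) x
      constructor <;> linarith [this.1, this.2]) n hn t ht0
  rw [integral_neg] at hH2
  have hsub : Eᶜ ⊆ {v | n * (∫ o, exceed (m + y + s) o ∂Q) + n * t ≤
        ∑ i, exceed (m + y + s) (v i)} ∪
      {v | n * (-∫ o, exceed (m + y - s) o ∂Q) + n * t ≤ ∑ i, -exceed (m + y - s) (v i)} := by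
    intro v hv
    by_contra hcon
    simp only [Set.mem_union, Set.mem_ofPred_eq, not_or, not_le, Finset.sum_neg_distrib] at hcon
    apply hv
    have h1 : n * (∫ o, exceed (m + y + s) o ∂Q) ≤ n * qm := by gcongr
    have h2 : n * qp ≤ n * (∫ o, exceed (m + y - s) o ∂Q) := by gcongr
    have e1 : n * qm + n * t = n * q := by rw [hq, ht]; ring
    have e2 : n * qp - n * t = n * q := by rw [hq, ht]; ring
    have := uQuant_mem n q (m + y - s) (m + y + s) v (by linarith [hcon.2]) (by linarith [hcon.1])
    change |uQuant n q v - y - m| ≤ s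
    rw [abs_le]
    constructor <;> linarith [this.1, this.2]
  have hE : P.real Eᶜ ≤ 2 * Real.exp (-(2 * n * t ^ 2)) := by
    refine (measureReal_mono hsub).trans ((measureReal_union_le _ _).trans ?_)
    linarith
  rw [probReal_compl_eq_one_sub hmE] at hE
  have : Real.exp (-(2 * n * t ^ 2)) ≤ Real.exp (-(rate L s * n)) := by
    apply Real.exp_le_exp.2
    nlinarith
  change _ ≤ P.real E
  linarith

lemma measurable_getD : Measurable (fun o : Option ℝ => o.getD 0) := by
  rw [measurable_option_iff]
  exact measurable_id

/-- Randomised refinement of a coarse estimator, using one further sample as randomness. -/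
lemma boost {ε s δ : ℝ} (hε : ε ∈ Set.Ioo (0:ℝ) 1) (hs : 0 < s) (hs1 : s ≤ 1) (hδ : 0 < δ)
    (hδs : δ ≤ s) (k : ℕ) (A : (Fin k → Option ℝ) → ℝ) (hA : Measurable A) :
    ∃ B : (Fin (k + 1) → Option ℝ) → ℝ, Measurable B ∧ ∀ (m : ℝ) (Q : Measure (Option ℝ)),
      IsCorruptedVersion ε (fun x => gaussPDF (x - m)) Q →
      1 / 2 ≤ (Measure.pi fun _ : Fin k => Q).real {v | |A v - m| ≤ s} →
      (1 - ε) * (δ / s) * Real.exp (-3) ≤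
        (Measure.pi fun _ : Fin (k + 1) => Q).real {v | |B v - m| ≤ δ} := by
  set e := MeasurableEquiv.piFinSuccAbove (fun _ : Fin (k + 1) => Option ℝ) 0 with he
  set F : Option ℝ × (Fin k → Option ℝ) → ℝ := fun p => (1 - s) * A p.2 + s * p.1.getD 0 with hF
  have hFm : Measurable F := by
    have h1 : Measurable fun p : Option ℝ × (Fin k → Option ℝ) => p.1.getD 0 :=
      measurable_getD.comp measurable_fst
    have h2 : Measurable fun p : Option ℝ × (Fin k → Option ℝ) => A p.2 :=
      hA.comp measurable_snd
    exact (h2.const_mul _).add (h1.const_mul _)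
  refine ⟨fun v => F (e v), hFm.comp e.measurable, ?_⟩
  intro m Q hQ hE
  have := hQ.1
  have hmp := measurePreserving_piFinSuccAbove (fun _ : Fin (k + 1) => Q) 0
  have hS : MeasurableSet {p : Option ℝ × (Fin k → Option ℝ) | |F p - m| ≤ δ} :=
    measurableSet_le (hFm.sub_const _).abs measurable_const
  have hpre : {v : Fin (k + 1) → Option ℝ | |F (e v) - m| ≤ δ} =
      e ⁻¹' {p : Option ℝ × (Fin k → Option ℝ) | |F p - m| ≤ δ} := rfl
  set S := {p : Option ℝ × (Fin k → Option ℝ) | |F p - m| ≤ δ} with hSdef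
  have hEm : MeasurableSet {v : Fin k → Option ℝ | |A v - m| ≤ s} :=
    measurableSet_le (hA.sub_const _).abs measurable_const
  set E := {v : Fin k → Option ℝ | |A v - m| ≤ s} with hEdef
  set P := Measure.pi fun _ : Fin k => Q with hP
  have hmeas : (Measure.pi fun _ : Fin (k + 1) => Q) (e ⁻¹' S) = (Q.prod P) S :=
    hmp.measure_preimage hS.nullMeasurableSet
  set c := (1 - ε) * (2 * (δ / s) * Real.exp (-3)) with hc
  have hsec : ∀ v ∈ E, ENNReal.ofReal c ≤ Q ((fun x => (x, v)) ⁻¹' S) := by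
    intro v hv
    have hv' : |A v - m| ≤ s := hv
    have hw := window_bound (c := (m - (1 - s) * A v) / s) (h := δ / s) hε hQ (by
        have : (m - (1 - s) * A v) / s - m = (1 - s) * (m - A v) / s := by field_simp; ring
        rw [this, abs_div, abs_mul, abs_of_nonneg (by linarith : 0 ≤ 1 - s), abs_of_pos hs,
          div_le_one hs, abs_sub_comm]
        nlinarith [abs_nonneg (A v - m)]) (by positivity) ((div_le_one hs).2 hδs)
    refine (ENNReal.ofReal_le_ofReal hw).trans ?_
    rw [ofReal_measureReal]
    apply measure_mono
    rintro _ ⟨x, hx, rfl⟩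
    change |(1 - s) * A v + s * x - m| ≤ δ
    have h1 : s * ((m - (1 - s) * A v) / s - δ / s) ≤ s * x := mul_le_mul_of_nonneg_left hx.1 hs.le
    have h2 : s * x ≤ s * ((m - (1 - s) * A v) / s + δ / s) := mul_le_mul_of_nonneg_left hx.2 hs.le
    rw [mul_sub, mul_div_cancel₀ _ hs.ne', mul_div_cancel₀ _ hs.ne'] at h1
    rw [mul_add, mul_div_cancel₀ _ hs.ne', mul_div_cancel₀ _ hs.ne'] at h2
    rw [abs_le]
    constructor <;> linarith
  have hlow : ENNReal.ofReal c * P E ≤ (Q.prod P) S := by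
    rw [Measure.prod_apply_symm hS]
    calc ENNReal.ofReal c * P E = ∫⁻ v in E, ENNReal.ofReal c ∂P := by
          rw [setLIntegral_const]
      _ ≤ ∫⁻ v in E, Q ((fun x => (x, v)) ⁻¹' S) ∂P := setLIntegral_mono' hEm hsec
      _ ≤ _ := setLIntegral_le_lintegral _ _
  have hc0 : 0 ≤ c := by
    have : 0 ≤ 1 - ε := by linarith [hε.2]
    positivity
  rw [hpre, Measure.real, hmeas]
  have h3 := ENNReal.toReal_mono (measure_ne_top _ _) hlow
  rw [ENNReal.toReal_mul, ENNReal.toReal_ofReal hc0] at h3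
  refine le_trans ?_ h3
  change 1 / 2 ≤ (P E).toReal at hE
  calc (1 - ε) * (δ / s) * Real.exp (-3) = c * (1 / 2) := by rw [hc]; ring
    _ ≤ c * (P E).toReal := by gcongr

/-- Single-sample estimator. -/
lemma single {ε δ : ℝ} (hε : ε ∈ Set.Ioo (0:ℝ) 1) (hδ : 0 < δ) (n : ℕ) (hn : 0 < n) :
    ∃ B : (Fin n → Option ℝ) → ℝ, Measurable B ∧ ∀ (m : ℝ) (Q : Measure (Option ℝ)),
      IsCorruptedVersion ε (fun x => gaussPDF (x - m)) Q →
      (1 - ε) * (min 1 δ) * Real.exp (-3) ≤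
        (Measure.pi fun _ : Fin n => Q).real {v | |B v - m| ≤ δ} := by
  refine ⟨fun v => (v ⟨0, hn⟩).getD 0, measurable_getD.comp (measurable_pi_apply _), ?_⟩
  intro m Q hQ
  have := hQ.1
  have hmp := measurePreserving_eval (fun _ : Fin n => Q) ⟨0, hn⟩
  have hS : MeasurableSet {o : Option ℝ | |o.getD 0 - m| ≤ δ} :=
    measurableSet_le (measurable_getD.sub_const _).abs measurable_const
  have h1 : (Measure.pi fun _ : Fin n => Q) {v | |(v ⟨0, hn⟩).getD 0 - m| ≤ δ} =
      Q {o : Option ℝ | |o.getD 0 - m| ≤ δ} := hmp.measure_preimage hS.nullMeasurableSet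
  have hd0 : 0 < min 1 δ := lt_min one_pos hδ
  have hw := window_bound (c := m) (h := min 1 δ) hε hQ (by simp) hd0.le (min_le_left _ _)
  rw [Measure.real, h1]
  have hsub : (some '' Set.Icc (m - min 1 δ) (m + min 1 δ) : Set (Option ℝ)) ⊆
      {o : Option ℝ | |o.getD 0 - m| ≤ δ} := by
    rintro _ ⟨x, hx, rfl⟩
    change |x - m| ≤ δ
    rw [abs_le]
    have := min_le_right 1 δ
    constructor <;> linarith [hx.1, hx.2]
  · refine le_trans ?_ (hw.trans (measureReal_mono hsub (measure_ne_top _ _)))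
    have : 0 ≤ 1 - ε := by linarith [hε.2]
    have : 0 ≤ (1 - ε) * (min 1 δ) * Real.exp (-3) := by positivity
    linarith

lemma rate_compare {L δ s : ℝ} (hδ : 0 < δ) (hδs : δ ≤ s) (hs1 : s ≤ 1) (hL : 0 < L) :
    rate L δ ≤ δ / s * rate L s := by
  have hs : 0 < s := hδ.trans_le hδs
  unfold rate
  rw [min_eq_right (hδs.trans hs1), min_eq_right hs1]
  have h1 : Real.exp (-15 - 4 * (L / δ) ^ 2) ≤ Real.exp (-15 - 4 * (L / s) ^ 2) := by
    gcongr
  have e : δ / s * (s ^ 2 * Real.exp (-15 - 4 * (L / s) ^ 2)) =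
      δ * s * Real.exp (-15 - 4 * (L / s) ^ 2) := by field_simp
  rw [e]
  apply mul_le_mul _ h1 (Real.exp_pos _).le (by positivity)
  nlinarith

lemma rate_nonneg (L s : ℝ) : 0 ≤ rate L s := by unfold rate; positivity

lemma rate_le_one {L s : ℝ} (hs : 0 < s) : rate L s ≤ 1 := by
  unfold rate
  have hd0 : 0 < min 1 s := lt_min one_pos hs
  have : Real.exp (-15 - 4 * (L / s) ^ 2) ≤ 1 :=
    Real.exp_le_one_iff.2 (by nlinarith [sq_nonneg (L / s)])
  have h2 : (min 1 s) ^ 2 ≤ 1 := pow_le_one₀ hd0.le (min_le_left _ _)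
  exact mul_le_one₀ h2 (Real.exp_pos _).le this

lemma b_le {ε L δ : ℝ} (hε : ε ∈ Set.Ioo (0:ℝ) 1) (hL0 : 0 < L) (hεL : ε ≤ L) (hδ : 0 < δ)
    (hδL : δ ^ 2 ≤ L) :
    ε ^ 2 * (1 - ε) * Real.exp (-((4 + Real.exp 20) * (L / δ) ^ 2)) ≤
      (1 - ε) * Real.exp (-5) * rate L δ := by
  set u := L / δ with hu
  have hu0 : 0 < u := div_pos hL0 hδ
  have hus : u * δ = L := div_mul_cancel₀ L hδ.ne'
  have h1 : ε ≤ min 1 δ * u := by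
    rcases le_total 1 δ with h | h
    · rw [min_eq_left h]
      have : δ ≤ u := by
        rw [hu, le_div_iff₀ hδ]; nlinarith
      linarith [hε.2]
    · rw [min_eq_right h]; linarith
  have h2 : ε ^ 2 ≤ (min 1 δ * u) ^ 2 := pow_le_pow_left₀ hε.1.le h1 2
  have h3 : u ^ 2 * Real.exp (-(Real.exp 20 * u ^ 2)) ≤ Real.exp (-20) := by
    have := Real.add_one_le_exp (Real.exp 20 * u ^ 2)
    rw [Real.exp_neg, Real.exp_neg, ← div_eq_mul_inv, div_le_iff₀ (Real.exp_pos _),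
      inv_mul_eq_div, le_div_iff₀ (Real.exp_pos _)]
    linarith
  have hε1 : 0 ≤ 1 - ε := by linarith [hε.2]
  calc ε ^ 2 * (1 - ε) * Real.exp (-((4 + Real.exp 20) * u ^ 2))
      ≤ (min 1 δ * u) ^ 2 * (1 - ε) * Real.exp (-((4 + Real.exp 20) * u ^ 2)) := by gcongr
    _ = (1 - ε) * (min 1 δ) ^ 2 * Real.exp (-(4 * u ^ 2)) *
        (u ^ 2 * Real.exp (-(Real.exp 20 * u ^ 2))) := by
        rw [show -((4 + Real.exp 20) * u ^ 2) = -(4 * u ^ 2) + -(Real.exp 20 * u ^ 2) by ring,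
          Real.exp_add]
        ring
    _ ≤ (1 - ε) * (min 1 δ) ^ 2 * Real.exp (-(4 * u ^ 2)) * Real.exp (-20) := by gcongr
    _ = (1 - ε) * Real.exp (-5) * rate L δ := by
        unfold rate
        rw [← hu, show -15 - 4 * u ^ 2 = -(4 * u ^ 2) + -15 by ring, Real.exp_add,
          show (-20:ℝ) = -5 + -15 by norm_num, Real.exp_add]
        ring

lemma exp_two_ge : 4 ≤ Real.exp 2 := by
  have : Real.exp 2 = Real.exp 1 * Real.exp 1 := by rw [← Real.exp_add]; norm_num
  rw [this]
  nlinarith [Real.exp_one_gt_d9]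

lemma exp_num : 4 * Real.exp (-5) ≤ Real.exp (-3) := by
  rw [show (-3:ℝ) = 2 + -5 by norm_num, Real.exp_add]
  have := exp_two_ge
  gcongr

/-- Core: exponent form of the result. -/
lemma core {ε L δ : ℝ} (hε : ε ∈ Set.Ioo (0:ℝ) 1) (hL : 1 - ε = Real.exp (-L))
    (hL0 : 0 < L) (hδ : 0 < δ) (hδL : δ ^ 2 ≤ L) (n : ℕ) (hn : 0 < n) (b : ℝ)
    (hb : b ≤ (1 - ε) * Real.exp (-5) * rate L δ) :
    ∃ A : (Fin n → Option ℝ) → ℝ, Measurable A ∧ ∀ (m : ℝ) (Q : Measure (Option ℝ)),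
      IsCorruptedVersion ε (fun x => gaussPDF (x - m)) Q →
      1 - Real.exp (-(b * n)) ≤ (Measure.pi fun _ : Fin n => Q).real {v | |A v - m| ≤ δ} := by
  have hn' : (0:ℝ) < n := by exact_mod_cast hn
  have hε1 : 0 ≤ 1 - ε := by linarith [hε.2]
  have hr0 := rate_nonneg L δ
  have hexp5 : Real.exp (-5) ≤ 1 / 4 := by
    have := exp_num
    have h3 : Real.exp (-3) ≤ 1 := Real.exp_le_one_iff.2 (by norm_num)
    linarith
  have hlin : ∀ x, b * n ≤ x → 1 - Real.exp (-(b * n)) ≤ x := by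
    intro x hx
    have := Real.add_one_le_exp (-(b * n))
    linarith
  have hbn : b * n ≤ (1 - ε) * Real.exp (-5) * (rate L δ * n) := by
    rw [← mul_assoc]
    exact mul_le_mul_of_nonneg_right hb hn'.le
  have hnum := exp_num
  have hexp0 := Real.exp_pos (-5)
  rcases le_or_gt 4 (rate L δ * n) with hbig | hsmall
  · have hLs : L ≤ (L / δ) ^ 2 + 1 := by
      have : L ≤ (L / δ) ^ 2 := by
        rw [div_pow, le_div_iff₀ (by positivity)]
        nlinarith
      linarith
    obtain ⟨A, hA, h⟩ := quant_estimator hε hL hL0 hδ hLs n hn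
    refine ⟨A, hA, fun m Q hQ => le_trans ?_ (h m Q hQ)⟩
    have h1 : b * n ≤ rate L δ * n / 2 := by
      have : (1 - ε) * Real.exp (-5) ≤ 1 / 2 := by nlinarith [hε.1]
      nlinarith
    have h2 : 2 * Real.exp (-(rate L δ * n)) ≤ Real.exp (-(b * n)) := by
      calc 2 * Real.exp (-(rate L δ * n)) ≤ Real.exp 2 * Real.exp (-(rate L δ * n)) := by
            gcongr; linarith [exp_two_ge]
        _ ≤ _ := by
            rw [← Real.exp_add]; apply Real.exp_le_exp.2; linarith
    linarith
  · rcases le_or_gt 1 δ with hδ1 | hδ1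
    · obtain ⟨A, hA, h⟩ := single hε hδ n hn
      refine ⟨A, hA, fun m Q hQ => le_trans (hlin _ ?_) (h m Q hQ)⟩
      rw [min_eq_left hδ1]
      calc b * n ≤ _ := hbn
        _ ≤ (1 - ε) * Real.exp (-5) * 4 := by gcongr
        _ = (1 - ε) * (4 * Real.exp (-5)) := by ring
        _ ≤ (1 - ε) * 1 * Real.exp (-3) := by rw [mul_one]; gcongr
    rcases lt_or_ge (rate L 1 * n) 4 with h1 | h1
    · obtain ⟨A, hA, h⟩ := single hε hδ n hn
      refine ⟨A, hA, fun m Q hQ => le_trans (hlin _ ?_) (h m Q hQ)⟩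
      rw [min_eq_right hδ1.le]
      have hc := rate_compare hδ hδ1.le le_rfl hL0
      rw [div_one] at hc
      calc b * n ≤ _ := hbn
        _ ≤ (1 - ε) * Real.exp (-5) * (δ * rate L 1 * n) := by gcongr
        _ = (1 - ε) * Real.exp (-5) * δ * (rate L 1 * n) := by ring
        _ ≤ (1 - ε) * Real.exp (-5) * δ * 4 := by gcongr
        _ = (1 - ε) * δ * (4 * Real.exp (-5)) := by ring
        _ ≤ (1 - ε) * δ * Real.exp (-3) := by gcongr
    · have hcont : ContinuousOn (fun s => rate L s * n) (Set.Icc δ 1) := by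
        unfold rate
        have : ∀ x ∈ Set.Icc δ 1, x ≠ 0 := fun x hx => (hδ.trans_le hx.1).ne'
        fun_prop (disch := assumption)
      obtain ⟨s, ⟨hδs, hs1⟩, hs4⟩ :=
        intermediate_value_Icc hδ1.le hcont (show (4:ℝ) ∈ Set.Icc _ _ from ⟨hsmall.le, h1⟩)
      have hs : 0 < s := hδ.trans_le hδs
      have hs4' : rate L s * n = 4 := hs4
      have hn4 : (4:ℝ) ≤ n := by
        have := rate_le_one (L := L) hs
        nlinarith
      obtain ⟨k, rfl⟩ : ∃ k, n = k + 1 := ⟨n - 1, by omega⟩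
      have hk : 0 < k := by
        have : 4 ≤ k + 1 := by exact_mod_cast hn4
        omega
      have hLs : L ≤ (L / s) ^ 2 + 1 := by
        rcases le_total L 1 with h | h
        · nlinarith [sq_nonneg (L / s)]
        · have : L ≤ L / s := by rw [le_div_iff₀ hs]; nlinarith
          nlinarith
      obtain ⟨A, hA, h⟩ := quant_estimator hε hL hL0 hs hLs k hk
      obtain ⟨B, hB, h'⟩ := boost hε hs hs1 hδ hδs k A hA
      refine ⟨B, hB, fun m Q hQ => le_trans (hlin _ ?_) (h' m Q hQ (le_trans ?_ (h m Q hQ)))⟩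
      · have hc := rate_compare hδ hδs hs1 hL0
        calc b * (k + 1 : ℕ) ≤ _ := hbn
          _ ≤ (1 - ε) * Real.exp (-5) * (δ / s * rate L s * (k + 1 : ℕ)) := by gcongr
          _ = (1 - ε) * Real.exp (-5) * (δ / s) * (rate L s * (k + 1 : ℕ)) := by ring
          _ = (1 - ε) * (δ / s) * (4 * Real.exp (-5)) := by rw [hs4']; ring
          _ ≤ (1 - ε) * (δ / s) * Real.exp (-3) := by gcongr
      · push_cast at hs4'
        have hr1 := rate_le_one (L := L) hs
        have h2 : 2 ≤ rate L s * k := by linarith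
        have h3 : Real.exp (-(rate L s * k)) ≤ Real.exp (-2) := Real.exp_le_exp.2 (by linarith)
        have h4 : Real.exp (-2) ≤ 1 / 4 := by
          rw [Real.exp_neg, ← one_div]
          exact one_div_le_one_div_of_le (by norm_num) exp_two_ge
        linarith

end Helpers

theorem stmt11 :
    ∃ C : ℝ, 0 < C ∧
      ∀ (ε δ τ : ℝ) (n : ℕ),
        ε ∈ Set.Ioo (0 : ℝ) 1 →
        δ ∈ Set.Ioo 0 (Real.sqrt (Real.log (1 + ε / (1 - ε)))) →
        τ ∈ Set.Ioo (0 : ℝ) 1 → 0 < n →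
        (n : ℝ) ≥ Real.exp (C * ((1 / δ) * Real.log (1 + ε / (1 - ε))) ^ 2) *
            Real.log (1 / τ) / (ε ^ 2 * (1 - ε)) →
        ∃ A : (Fin n → Option ℝ) → ℝ, Measurable A ∧
          ∀ (μ : ℝ) (Q : Measure (Option ℝ)),
            IsCorruptedVersion ε (fun x => gaussPDF (x - μ)) Q →
            ((Measure.pi fun _ : Fin n => Q) {v | |A v - μ| ≤ δ}).toReal ≥ 1 - τ := by
  refine ⟨4 + Real.exp 20, by positivity, ?_⟩
  intro ε δ τ n hε hδ hτ hn hnb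
  have hε1 : 0 < 1 - ε := by linarith [hε.2]
  have e1 : 1 + ε / (1 - ε) = (1 - ε)⁻¹ := by field_simp; ring
  set L := Real.log (1 + ε / (1 - ε)) with hLdef
  have hL' : L = -Real.log (1 - ε) := by rw [hLdef, e1, Real.log_inv]
  have hL : 1 - ε = Real.exp (-L) := by rw [hL', neg_neg, Real.exp_log hε1]
  have hεL : ε ≤ L := by
    have := Real.log_le_sub_one_of_pos hε1
    linarith
  have hL0 : 0 < L := hε.1.trans_le hεL
  have hδL : δ ^ 2 ≤ L := ((Real.lt_sqrt hδ.1.le).1 hδ.2).le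
  obtain ⟨A, hA, h⟩ := core hε hL hL0 hδ.1 hδL n hn _ (b_le hε hL0 hεL hδ.1 hδL)
  refine ⟨A, hA, fun μ Q hQ => ?_⟩
  have h1 := h μ Q hQ
  set b := ε ^ 2 * (1 - ε) * Real.exp (-((4 + Real.exp 20) * (L / δ) ^ 2)) with hb
  have hlog : Real.log (1 / τ) ≤ b * n := by
    have hpos : 0 < ε ^ 2 * (1 - ε) := mul_pos (pow_pos hε.1 2) hε1
    rw [ge_iff_le, div_le_iff₀ hpos, one_div_mul_eq_div] at hnb
    rw [hb, Real.exp_neg]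
    set X := Real.exp ((4 + Real.exp 20) * (L / δ) ^ 2) with hX
    have hXpos : 0 < X := Real.exp_pos _
    rw [show ε ^ 2 * (1 - ε) * X⁻¹ * n = (n * (ε ^ 2 * (1 - ε))) / X by ring, le_div_iff₀ hXpos]
    linarith
  have h2 : Real.exp (-(b * n)) ≤ τ := by
    rw [one_div, Real.log_inv] at hlog
    calc Real.exp (-(b * n)) ≤ Real.exp (Real.log τ) := Real.exp_le_exp.2 (by linarith)
      _ = τ := Real.exp_log hτ.1
  change _ ≤ (Measure.pi fun _ : Fin n => Q).real {v | |A v - μ| ≤ δ}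
  linarith
end
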